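/- Let X and Y be nonempty finite types, P : X × Y → ℝ a joint distribution, and Δ : X × Y × Y → ℝ a distortion function. Suppose P is non-deterministic, i.e., there exists x with P_X(x) > 0 such that P(·|x) is not a point mass, and suppose the kernel Q_P given by Q_P(x) = P(·|x) for P_X(x) > 0 (and defined arbitrarily, say uniform, elsewhere) minimizes the expected distortion 𝔇(·; P) over all kernels. Then the minimizer is non-unique: there exists a kernel Q' with 𝔇(Q'; P) = 𝔇(Q_P; P) = min over all kernels of 𝔇(·; P), and Σ_x P_X(x) · TV(Q'(x), Q_P(x)) > 0. -/

import Mathlib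

open Finset

variable {X Y : Type*} [Fintype X] [Fintype Y]

/-- `P : X × Y → ℝ` is a joint probability distribution. -/
def IsJointDist (P : X × Y → ℝ) : Prop :=
  (∀ p, 0 ≤ P p) ∧ ∑ p : X × Y, P p = 1

/-- `q : Y → ℝ` is a probability mass function. -/
def IsPMF {Z : Type*} [Fintype Z] (q : Z → ℝ) : Prop :=
  (∀ z, 0 ≤ q z) ∧ ∑ z : Z, q z = 1

/-- `q` is a point mass: it assigns probability 1 to a single element. -/
def IsPointMass {Z : Type*} [Fintype Z] [DecidableEq Z] (q : Z → ℝ) : Prop :=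
  ∃ z₀, ∀ z, q z = if z = z₀ then 1 else 0

/-- The X-marginal of a joint distribution. -/
def margX (P : X × Y → ℝ) (x : X) : ℝ := ∑ y : Y, P (x, y)

/-- The Y-marginal of a joint distribution. -/
def margY (P : X × Y → ℝ) (y : Y) : ℝ := ∑ x : X, P (x, y)

/-- The conditional pmf `P(· | x)`. -/
noncomputable def condY (P : X × Y → ℝ) (x : X) (y : Y) : ℝ := P (x, y) / margX P x

/-- `Q : X → Y → ℝ` is a (Markov) kernel: each `Q x` is a pmf on `Y`. -/
def IsKernel (Q : X → Y → ℝ) : Prop := ∀ x, IsPMF (Q x)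

/-- The expected distortion of the kernel `Q` under the joint distribution `P`:
`𝔇(Q; P) = Σ_{x,y} P(x,y) · Σ_{y'} Q(x)(y') · Δ(x,y,y')`. -/
def expDist (Δ : X → Y → Y → ℝ) (Q : X → Y → ℝ) (P : X × Y → ℝ) : ℝ :=
  ∑ x : X, ∑ y : Y, P (x, y) * ∑ y' : Y, Q x y' * Δ x y y'

/-- The output marginal of the kernel `Q` under the input pmf `μ`. -/
def outMarg (Q : X → Y → ℝ) (μ : X → ℝ) (y' : Y) : ℝ := ∑ x : X, μ x * Q x y'

/-- Total variation distance between two pmfs on a finite type. -/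
noncomputable def TVdist {Z : Type*} [Fintype Z] (p q : Z → ℝ) : ℝ := (1 / 2) * ∑ z : Z, |p z - q z|

/-- `Q` minimizes the expected distortion `𝔇(·; P)` over all kernels. -/
def MinimizesExpDist (Δ : X → Y → Y → ℝ) (Q : X → Y → ℝ) (P : X × Y → ℝ) : Prop :=
  IsKernel Q ∧ ∀ Q', IsKernel Q' → expDist Δ Q P ≤ expDist Δ Q' P

/-- `Δ` is distribution preserving at the joint distribution `P`: every kernel
minimizing the expected distortion has output marginal (under `P`'s X-marginal)
equal to `P`'s Y-marginal. -/
def DistPreserving (Δ : X → Y → Y → ℝ) (P : X × Y → ℝ) : Prop :=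
  ∀ Q, MinimizesExpDist Δ Q P → outMarg Q (margX P) = margY P

/-- `Δ` is stably distribution preserving at `P`: it is distribution preserving
at every joint distribution in some TV `ε`-ball around `P`. -/
def StablyDistPreserving (Δ : X → Y → Y → ℝ) (P : X × Y → ℝ) : Prop :=
  ∃ ε > 0, ∀ P' : X × Y → ℝ, IsJointDist P' → TVdist P P' ≤ ε → DistPreserving Δ P'

/-!
The expected distortion is linear in each pmf `Q x` separately, so it is minimized by sending every
input to a cheapest output. Such a deterministic minimizer differs from any minimizer that is not a
point mass at some input of positive probability.
-/

section PMF

variable {Z : Type*} [Fintype Z]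

theorem IsPointMass.isPMF [DecidableEq Z] {q : Z → ℝ} (hq : IsPointMass q) : IsPMF q := by
  obtain ⟨z₀, hz₀⟩ := hq
  refine ⟨fun z => ?_, by simp [hz₀]⟩
  rw [hz₀]
  split_ifs <;> norm_num

theorem isPointMass_single [DecidableEq Z] (z : Z) : IsPointMass (Pi.single z (1 : ℝ)) :=
  ⟨z, Pi.single_apply z 1⟩

theorem IsPMF.le_sum_mul {q c : Z → ℝ} {m : ℝ} (hq : IsPMF q) (hm : ∀ z, m ≤ c z) :
    m ≤ ∑ z, q z * c z :=
  calc m = ∑ z, q z * m := by rw [← sum_mul, hq.2, one_mul]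
    _ ≤ ∑ z, q z * c z := sum_le_sum fun z _ => mul_le_mul_of_nonneg_left (hm z) (hq.1 z)

theorem TVdist_nonneg (p q : Z → ℝ) : 0 ≤ TVdist p q := by
  unfold TVdist
  positivity

theorem TVdist_pos {p q : Z → ℝ} (h : p ≠ q) : 0 < TVdist p q := by
  obtain ⟨z, hz⟩ := Function.ne_iff.mp h
  have hsum : 0 < ∑ z, |p z - q z| :=
    sum_pos' (fun _ _ => abs_nonneg _) ⟨z, mem_univ z, abs_sub_pos.mpr hz⟩
  unfold TVdist
  positivity

theorem sum_mul_TVdist_pos {μ : X → ℝ} {p q : X → Z → ℝ} {x : X} (hμ : ∀ x, 0 ≤ μ x)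
    (hx : 0 < μ x) (h : p x ≠ q x) : 0 < ∑ x, μ x * TVdist (p x) (q x) :=
  sum_pos' (fun x _ => mul_nonneg (hμ x) (TVdist_nonneg _ _))
    ⟨x, mem_univ x, mul_pos hx (TVdist_pos h)⟩

end PMF

omit [Fintype X] in
theorem margX_nonneg {P : X × Y → ℝ} (hP : ∀ p, 0 ≤ P p) (x : X) : 0 ≤ margX P x :=
  sum_nonneg fun y _ => hP (x, y)

/-- The contribution of input `x` to the expected distortion when its output is always `z`. It is
weighted by the joint `P (x, y)` rather than by the conditional, so that inputs of probability zero
need no division. -/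
def outputCost (Δ : X → Y → Y → ℝ) (P : X × Y → ℝ) (x : X) (z : Y) : ℝ :=
  ∑ y, P (x, y) * Δ x y z

theorem expDist_eq_sum_mul_outputCost (Δ : X → Y → Y → ℝ) (Q : X → Y → ℝ) (P : X × Y → ℝ) :
    expDist Δ Q P = ∑ x, ∑ z, Q x z * outputCost Δ P x z := by
  simp only [expDist, outputCost, mul_sum]
  refine sum_congr rfl fun x _ => ?_
  rw [sum_comm]
  simp only [mul_left_comm]

theorem MinimizesExpDist.expDist_eq {Δ : X → Y → Y → ℝ} {Q Q' : X → Y → ℝ} {P : X × Y → ℝ}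
    (hQ : MinimizesExpDist Δ Q P) (hQ' : MinimizesExpDist Δ Q' P) :
    expDist Δ Q P = expDist Δ Q' P :=
  le_antisymm (hQ.2 Q' hQ'.1) (hQ'.2 Q hQ.1)

theorem minimizesExpDist_single_of_forall_outputCost_le [DecidableEq Y] {Δ : X → Y → Y → ℝ}
    {P : X × Y → ℝ} {f : X → Y} (hf : ∀ x z, outputCost Δ P x (f x) ≤ outputCost Δ P x z) :
    MinimizesExpDist Δ (fun x => Pi.single (f x) 1) P := by
  refine ⟨fun x => (isPointMass_single (f x)).isPMF, fun Q hQ => ?_⟩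
  calc expDist Δ (fun x => Pi.single (f x) 1) P
      = ∑ x, outputCost Δ P x (f x) := by
        simp [expDist_eq_sum_mul_outputCost, Pi.single_apply]
    _ ≤ ∑ x, ∑ z, Q x z * outputCost Δ P x z :=
        sum_le_sum fun x _ => (hQ x).le_sum_mul (hf x)
    _ = expDist Δ Q P := (expDist_eq_sum_mul_outputCost Δ Q P).symm

theorem exists_minimizesExpDist_isPointMass [DecidableEq Y] [Nonempty Y] (Δ : X → Y → Y → ℝ)
    (P : X × Y → ℝ) :
    ∃ Q : X → Y → ℝ, MinimizesExpDist Δ Q P ∧ ∀ x, IsPointMass (Q x) := by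
  choose f hf using fun x => Finite.exists_min (outputCost Δ P x)
  exact ⟨_, minimizesExpDist_single_of_forall_outputCost_le hf, fun x => isPointMass_single (f x)⟩

theorem minimizer_nonunique_general [DecidableEq Y] {P : X × Y → ℝ} (hP : ∀ p, 0 ≤ P p)
    {Δ : X → Y → Y → ℝ} {Q : X → Y → ℝ} (hQ : MinimizesExpDist Δ Q P)
    (hnondet : ∃ x, 0 < margX P x ∧ ¬ IsPointMass (Q x)) :
    ∃ Q' : X → Y → ℝ, (∀ x, IsPointMass (Q' x)) ∧ MinimizesExpDist Δ Q' P ∧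
      expDist Δ Q' P = expDist Δ Q P ∧
      0 < ∑ x, margX P x * TVdist (Q' x) (Q x) := by
  obtain ⟨x, hx, hQx⟩ := hnondet
  have : Nonempty Y := univ_nonempty_iff.mp (nonempty_of_sum_ne_zero hx.ne')
  obtain ⟨Q', hQ', hdet⟩ := exists_minimizesExpDist_isPointMass Δ P
  have hne : Q' x ≠ Q x := fun h => hQx (h ▸ hdet x)
  exact ⟨Q', hdet, hQ', hQ'.expDist_eq hQ, sum_mul_TVdist_pos (margX_nonneg hP) hx hne⟩

/-- Lemma B.3: if `P` is non-deterministic and the kernel `Q_P` given by the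
true conditionals `P(·|x)` (at positive-probability inputs; arbitrary, e.g.
uniform, elsewhere) minimizes the expected distortion, then the minimizer is
non-unique: there is another minimizing kernel `Q'` at strictly positive
average total-variation distance from `Q_P`. -/
theorem minimizer_nonunique [DecidableEq Y] [Nonempty X] [Nonempty Y]
    (P : X × Y → ℝ) (hP : IsJointDist P) (Δ : X → Y → Y → ℝ)
    (hnondet : ∃ x, 0 < margX P x ∧ ¬ IsPointMass (condY P x))
    (QP : X → Y → ℝ) (hQPker : IsKernel QP)
    (hQPcond : ∀ x, 0 < margX P x → QP x = condY P x)
    (hQPmin : MinimizesExpDist Δ QP P) :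
    ∃ Q' : X → Y → ℝ, MinimizesExpDist Δ Q' P ∧
      expDist Δ Q' P = expDist Δ QP P ∧
      0 < ∑ x : X, margX P x * TVdist (Q' x) (QP x) := by
  obtain ⟨x, hx, hcond⟩ := hnondet
  obtain ⟨Q', -, hQ'⟩ := minimizer_nonunique_general hP.1 hQPmin ⟨x, hx, hQPcond x hx ▸ hcond⟩
  exact ⟨Q', hQ'⟩
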